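/- Let N ≥ 2 be an integer, α ∈ ℝ, and κ a Feller Markov kernel on ℝ^N (i.e. v ↦ ∫ f dκ(v) is continuous for every bounded continuous f : ℝ^N → ℝ) with k-step kernels P_k. Let V : ℝ^N → [1,∞) be continuous with V(v) → ∞ as |v| → ∞, and suppose there are α₁ ∈ (0,1), α₂ ∈ [0,∞) with ∫ V d(κ(v)) ≤ α₁ V(v) + α₂ for every v ∈ ℝ^N (Lyapunov condition). Fix γ ∈ (√α₁, 1) and set S := {v ∈ ℝ^N : V(v) ≤ 2α₂/(γ − α₁)}. Assume further: (i) κ(v)(D_α) = 1 for every v ∈ D_α; (ii) there exists w* in the interior of S with w* ∈ D_α such that for every δ > 0 there is k̄ ∈ ℕ with P_{k̄}(w, B_δ(w*) ∩ D_α) > 0 for every w ∈ S ∩ D_α; (iii) for every k ≥ 1 there is p_k : ℝ^N × ℝ^N → ℝ, jointly continuous on (S ∩ D_α) × (S ∩ D_α), such that P_k(v,B) = ∫_B p_k(v,w) dμ_{D_α}(w) for every v ∈ S ∩ D_α and every Borel set B ⊆ S ∩ D_α. Then κ admits exactly one invariant probability measure μ with μ(D_α) = 1. -/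

import Mathlib

open MeasureTheory

/-- The `k`-step kernels of a Markov kernel `κ` (`k`-fold composition of `κ`). -/
noncomputable def iterKernel {E : Type*} [MeasurableSpace E]
    (κ : E → Measure E) : ℕ → E → Measure E
  | 0, v => Measure.dirac v
  | (k + 1), v => (iterKernel κ k v).bind κ

/-! Existence is the Krylov–Bogoliubov argument: the Lyapunov condition makes the laws of the chain
started at `w*` tight, and by the Feller property every limit of their Cesàro means is invariant.

For uniqueness, two different invariant probability measures `μ₁`, `μ₂` would give two nonzero
mutually singular invariant measures `μ₁ - μ₁ ⊓ μ₂` and `μ₂ - μ₁ ⊓ μ₂`. But every nonzero invariant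
measure `π` carried by `D` charges `S` because `V` decreases on average outside `S`, hence charges
every neighborhood of `w*` in `D` by accessibility. By continuity of the densities, for some `k` all
the `P_k(v, ·)` with `v` near `w*` dominate one common measure `ν ≠ 0`, so `ν ≪ π`; two mutually
singular measures cannot both dominate `ν`. -/

section MarkovKernel

open Filter Topology Set ProbabilityTheory
open scoped ENNReal BoundedContinuousFunction

variable {E : Type*} [MeasurableSpace E]

lemma iterKernel_eq_pow (κ : Kernel E E) (k : ℕ) : iterKernel κ k = ⇑(κ ^ k) := by
  induction k with
  | zero => rfl
  | succ k ih =>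
    funext v
    rw [iterKernel, ih, pow_succ']
    exact (Kernel.comp_apply κ (κ ^ k) v).symm

lemma pow_succ_apply_eq_comp (κ : Kernel E E) (k : ℕ) (v : E) :
    (κ ^ (k + 1)) v = κ ∘ₘ (κ ^ k) v := by
  rw [pow_succ']
  exact Kernel.comp_apply κ (κ ^ k) v

instance isMarkovKernel_pow (κ : Kernel E E) [IsMarkovKernel κ] (k : ℕ) :
    IsMarkovKernel (κ ^ k) := by
  induction k with
  | zero => exact inferInstanceAs (IsMarkovKernel Kernel.id)
  | succ k ih =>
    rw [pow_succ']
    exact Kernel.IsMarkovKernel.comp κ (κ ^ k)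

lemma pow_apply_eq_zero_of_forall_mem {κ : Kernel E E} {D : Set E} (hD : MeasurableSet D)
    (h : ∀ v ∈ D, κ v Dᶜ = 0) (k : ℕ) : ∀ v ∈ D, (κ ^ k) v Dᶜ = 0 := by
  intro v hv
  induction k with
  | zero => exact (Measure.dirac_apply' v hD.compl).trans (indicator_of_notMem (not_not.2 hv) _)
  | succ k ih =>
    rw [pow_succ_apply_eq_comp]
    refine Measure.ae_comp_of_ae_ae hD ?_
    filter_upwards [measure_eq_zero_iff_ae_notMem.1 ih] with w hw
    exact h w (not_not.1 hw)

lemma invariant_pow {κ : Kernel E E} {π : Measure E} (h : κ.Invariant π) (k : ℕ) :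
    (κ ^ k).Invariant π := by
  induction k with
  | zero => exact Measure.id_comp
  | succ k ih =>
    rw [pow_succ']
    exact h.comp ih

lemma measure_ne_zero_of_invariant {κ : Kernel E E} {π : Measure E} (h : κ.Invariant π)
    {A B : Set E} (hA : π A ≠ 0) (hAB : ∀ v ∈ A, κ v B ≠ 0) : π B ≠ 0 := by
  intro hB
  rw [← h.def, measure_eq_zero_iff_ae_notMem] at hB
  refine hA (measure_eq_zero_iff_ae_notMem.2 ?_)
  filter_upwards [Measure.ae_ae_of_ae_comp hB] with v hvB hvA
  exact hAB v hvA (measure_eq_zero_iff_ae_notMem.2 hvB)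

section MutuallySingular

lemma comp_mono_right (κ : Kernel E E) {μ ν : Measure E} (h : μ ≤ ν) : κ ∘ₘ μ ≤ κ ∘ₘ ν := by
  refine Measure.le_iff.2 fun s hs ↦ ?_
  rw [Measure.bind_apply hs κ.aemeasurable, Measure.bind_apply hs κ.aemeasurable]
  exact lintegral_mono' h le_rfl

lemma invariant_inf {κ : Kernel E E} [IsMarkovKernel κ] {μ ν : Measure E} [IsFiniteMeasure μ]
    (hμ : κ.Invariant μ) (hν : κ.Invariant ν) : κ.Invariant (μ ⊓ ν) := by
  have : IsFiniteMeasure (μ ⊓ ν) := isFiniteMeasure_of_le μ inf_le_left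
  refine Measure.eq_of_le_of_measure_univ_eq (le_inf ?_ ?_) Measure.comp_apply_univ
  · exact (comp_mono_right κ inf_le_left).trans_eq hμ
  · exact (comp_mono_right κ inf_le_right).trans_eq hν

lemma invariant_sub {κ : Kernel E E} {μ ν : Measure E} [IsFiniteMeasure ν]
    (hμ : κ.Invariant μ) (hν : κ.Invariant ν) (hle : ν ≤ μ) : κ.Invariant (μ - ν) := by
  have h_add : κ ∘ₘ (μ - ν) + ν = μ := calc
    κ ∘ₘ (μ - ν) + ν = κ ∘ₘ (μ - ν) + κ ∘ₘ ν := by rw [hν.def]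
    _ = κ ∘ₘ μ := by rw [← Measure.comp_add, Measure.sub_add_cancel_of_le hle]
    _ = μ := hμ.def
  calc κ ∘ₘ (μ - ν) = κ ∘ₘ (μ - ν) + ν - ν := Measure.add_sub_cancel.symm
    _ = μ - ν := by rw [h_add]

lemma mutuallySingular_sub_inf (μ ν : Measure E) [IsFiniteMeasure μ] :
    (μ - μ ⊓ ν) ⟂ₘ (ν - μ ⊓ ν) := by
  have : IsFiniteMeasure (μ ⊓ ν) := isFiniteMeasure_of_le μ inf_le_left
  refine Measure.mutuallySingular_of_disjoint fun ρ hρμ hρν ↦ ?_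
  have add_inf_le {ξ : Measure E} (hξ : μ ⊓ ν ≤ ξ) (hρ : ρ ≤ ξ - μ ⊓ ν) : μ ⊓ ν + ρ ≤ ξ := by
    rw [add_comm, ← Measure.sub_add_cancel_of_le hξ]
    gcongr
  refine Measure.le_of_add_le_add_left (μ := μ ⊓ ν) ?_
  exact (le_inf (add_inf_le inf_le_left hρμ) (add_inf_le inf_le_right hρν)).trans_eq
    (add_zero _).symm

lemma exists_mutuallySingular_invariant_of_ne {κ : Kernel E E} [IsMarkovKernel κ]
    {μ ν : Measure E} [IsProbabilityMeasure μ] [IsProbabilityMeasure ν]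
    (hμ : κ.Invariant μ) (hν : κ.Invariant ν) (hne : μ ≠ ν) :
    ∃ μ' ≤ μ, ∃ ν' ≤ ν, κ.Invariant μ' ∧ κ.Invariant ν' ∧ μ' ≠ 0 ∧ ν' ≠ 0 ∧ μ' ⟂ₘ ν' := by
  have : IsFiniteMeasure (μ ⊓ ν) := isFiniteMeasure_of_le μ inf_le_left
  have h_inf := invariant_inf hμ hν
  have le_of_sub_inf_eq_zero {ξ : Measure E} (hξ : μ ⊓ ν ≤ ξ) (h : ξ - μ ⊓ ν = 0) :
      ξ ≤ μ ⊓ ν := by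
    rw [← Measure.sub_add_cancel_of_le hξ, h, zero_add]
  refine ⟨μ - μ ⊓ ν, Measure.sub_le, ν - μ ⊓ ν, Measure.sub_le, invariant_sub hμ h_inf inf_le_left,
    invariant_sub hν h_inf inf_le_right, fun h ↦ hne ?_, fun h ↦ hne ?_,
    mutuallySingular_sub_inf μ ν⟩
  · exact Measure.eq_of_le_of_isProbabilityMeasure
      ((le_of_sub_inf_eq_zero inf_le_left h).trans inf_le_right)
  · exact (Measure.eq_of_le_of_isProbabilityMeasure
      ((le_of_sub_inf_eq_zero inf_le_right h).trans inf_le_left)).symm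

end MutuallySingular

section Lyapunov

lemma lintegral_pow_le_of_drift {κ : Kernel E E} [IsMarkovKernel κ] {V : E → ℝ≥0∞}
    (hV : Measurable V) {a b : ℝ≥0∞} (ha : a < 1)
    (h_drift : ∀ v, ∫⁻ w, V w ∂κ v ≤ a * V v + b) (k : ℕ) (v : E) :
    ∫⁻ w, V w ∂(κ ^ k) v ≤ V v + b / (1 - a) := by
  have h_fix : a * (b / (1 - a)) + b = b / (1 - a) := by
    have h_ne : 1 - a ≠ 0 := (tsub_pos_of_lt ha).ne'
    have h_top : 1 - a ≠ ∞ := ENNReal.sub_ne_top ENNReal.one_ne_top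
    calc a * (b / (1 - a)) + b = a * (b / (1 - a)) + (1 - a) * (b / (1 - a)) := by
          rw [ENNReal.mul_div_cancel h_ne h_top]
      _ = b / (1 - a) := by rw [← add_mul, add_tsub_cancel_of_le ha.le, one_mul]
  induction k with
  | zero => exact (lintegral_dirac' v hV).trans_le le_self_add
  | succ k ih =>
    calc ∫⁻ w, V w ∂(κ ^ (k + 1)) v = ∫⁻ u, ∫⁻ w, V w ∂κ u ∂(κ ^ k) v := by
          rw [pow_succ_apply_eq_comp, Measure.lintegral_bind κ.aemeasurable hV.aemeasurable]
      _ ≤ ∫⁻ u, (a * V u + b) ∂(κ ^ k) v := lintegral_mono h_drift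
      _ = a * ∫⁻ u, V u ∂(κ ^ k) v + b := by
          rw [lintegral_add_right _ measurable_const, lintegral_const_mul _ hV, lintegral_const,
            measure_univ, mul_one]
      _ ≤ a * (V v + b / (1 - a)) + b := by gcongr
      _ = a * V v + b / (1 - a) := by rw [mul_add, add_assoc, h_fix]
      _ ≤ V v + b / (1 - a) := by gcongr; exact mul_le_of_le_one_left zero_le ha.le

lemma measure_ne_zero_of_lintegral_lt {κ : Kernel E E} [IsMarkovKernel κ] {V : E → ℝ≥0∞}
    (hV : Measurable V) (hV_top : ∀ v, V v ≠ ∞) {S : Set E}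
    (h_lt : ∀ v ∉ S, ∫⁻ w, V w ∂κ v < V v) {π : Measure E} [IsFiniteMeasure π]
    (hπ : κ.Invariant π) (hπ0 : π ≠ 0) : π S ≠ 0 := by
  intro hS
  have h_notMem : ∀ᵐ v ∂π, v ∉ S := measure_eq_zero_iff_ae_notMem.1 hS
  -- `V` need not be `π`-integrable: invariance is applied to the truncations `min V M`.
  have h_trunc (M : ℕ) : ∀ᵐ v ∂π, min (∫⁻ w, V w ∂κ v) M = min (V v) M := by
    have h_le : ∀ᵐ v ∂π, min (∫⁻ w, V w ∂κ v) M ≤ min (V v) M :=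
      h_notMem.mono fun v hv ↦ min_le_min_right _ (h_lt v hv).le
    have h_fin : ∫⁻ v, min (V v) M ∂π ≠ ∞ :=
      (lintegral_mono fun v ↦ min_le_right (V v) (M : ℝ≥0∞)).trans_lt
        (lintegral_const_lt_top (ENNReal.natCast_ne_top M)) |>.ne
    refine ae_eq_of_ae_le_of_lintegral_le h_le (ne_top_of_le_ne_top h_fin (lintegral_mono_ae h_le))
      (hV.min measurable_const).aemeasurable ?_
    calc ∫⁻ v, min (V v) M ∂π = ∫⁻ v, ∫⁻ w, min (V w) M ∂κ v ∂π := by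
          conv_lhs => rw [← hπ.def]
          exact Measure.lintegral_bind κ.aemeasurable (hV.min measurable_const).aemeasurable
      _ ≤ ∫⁻ v, min (∫⁻ w, V w ∂κ v) M ∂π := by
          refine lintegral_mono fun v ↦ le_min (lintegral_mono fun w ↦ min_le_left _ _) ?_
          exact (lintegral_mono fun w ↦ min_le_right _ _).trans_eq (by simp)
  refine hπ0 (ae_eq_bot.1 (eventually_false_iff_eq_bot.1 ?_))
  filter_upwards [h_notMem, ae_all_iff.2 h_trunc] with v hv hv_trunc
  obtain ⟨M, hM⟩ := ENNReal.exists_nat_gt (hV_top v)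
  have h_min := hv_trunc M
  rw [min_eq_left hM.le, min_eq_left ((h_lt v hv).trans hM).le] at h_min
  exact (h_lt v hv).ne h_min

lemma isTightMeasureSet_of_lintegral_le [TopologicalSpace E] {V : E → ℝ≥0∞} (hV : Measurable V)
    (hV_lim : Tendsto V (cocompact E) (𝓝 ∞)) {C : ℝ≥0∞} (hC : C ≠ ∞) {P : Set (Measure E)}
    (hP : ∀ μ ∈ P, ∫⁻ v, V v ∂μ ≤ C) : IsTightMeasureSet P := by
  refine isTightMeasureSet_iff_exists_isCompact_measure_compl_le.2 fun ε hε ↦ ?_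
  obtain ⟨M, hM⟩ := ENNReal.exists_nat_gt (ENNReal.div_ne_top hC hε.ne')
  have hM0 : (M : ℝ≥0∞) ≠ 0 := (zero_le.trans_lt hM).ne'
  obtain ⟨K, hK, hKV⟩ := mem_cocompact.1
    (hV_lim.eventually (eventually_ge_nhds (ENNReal.natCast_lt_top M)))
  refine ⟨K, hK, fun μ hμ ↦ ?_⟩
  calc μ Kᶜ ≤ μ {v | (M : ℝ≥0∞) ≤ V v} := measure_mono hKV
    _ ≤ (∫⁻ v, V v ∂μ) / M := meas_ge_le_lintegral_div hV.aemeasurable hM0 (by simp)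
    _ ≤ C / M := by gcongr; exact hP μ hμ
    _ ≤ ε := ENNReal.div_le_of_le_mul'
      ((ENNReal.div_le_iff_le_mul (.inl hε.ne') (.inr hM0)).1 hM.le)

end Lyapunov

section KrylovBogoliubov

/-- The Cesàro mean of the first `n + 1` measures of the sequence `μ`, as in the
Krylov–Bogoliubov construction; averaging `n + 1` rather than `n` terms makes it a probability
measure for every `n`. -/
noncomputable def cesaroMean (μ : ℕ → Measure E) (n : ℕ) : Measure E :=
  ((n : ℝ≥0∞) + 1)⁻¹ • ∑ k ∈ Finset.range (n + 1), μ k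

lemma cesaroMean_apply (μ : ℕ → Measure E) (n : ℕ) (s : Set E) :
    cesaroMean μ n s = ((n : ℝ≥0∞) + 1)⁻¹ * ∑ k ∈ Finset.range (n + 1), μ k s := by
  simp [cesaroMean]

lemma cesaroMean_apply_le {μ : ℕ → Measure E} {s : Set E} {ε : ℝ≥0∞} (h : ∀ k, μ k s ≤ ε) (n : ℕ) :
    cesaroMean μ n s ≤ ε := by
  rw [cesaroMean_apply]
  refine ENNReal.inv_mul_le_iff (by simp) (by simp) |>.2 ?_
  simpa using! Finset.sum_le_card_nsmul (Finset.range (n + 1)) _ ε fun k _ ↦ h k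

instance isProbabilityMeasure_cesaroMean (μ : ℕ → Measure E) [∀ k, IsProbabilityMeasure (μ k)]
    (n : ℕ) : IsProbabilityMeasure (cesaroMean μ n) := by
  refine ⟨?_⟩
  simp only [cesaroMean_apply, measure_univ, Finset.sum_const, Finset.card_range, nsmul_eq_mul,
    mul_one, Nat.cast_add, Nat.cast_one]
  exact ENNReal.inv_mul_cancel (by simp) (by simp)

lemma integral_comp_measure {κ : Kernel E E} {μ : Measure E} {f : E → ℝ}
    (hf : Integrable f (κ ∘ₘ μ)) : ∫ x, f x ∂(κ ∘ₘ μ) = ∫ v, ∫ x, f x ∂κ v ∂μ := by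
  rw [Measure.comp_eq_comp_const_apply] at hf ⊢
  rw [Kernel.integral_comp hf, Kernel.const_apply]

variable [TopologicalSpace E]

lemma isTightMeasureSet_range_cesaroMean {μ : ℕ → Measure E} (h : IsTightMeasureSet (range μ)) :
    IsTightMeasureSet (range (cesaroMean μ)) := by
  rw [isTightMeasureSet_iff_exists_isCompact_measure_compl_le] at h ⊢
  intro ε hε
  obtain ⟨K, hK, hKε⟩ := h ε hε
  exact ⟨K, hK, forall_mem_range.2 (cesaroMean_apply_le fun k ↦ hKε _ (mem_range_self k))⟩

lemma integral_cesaroMean [OpensMeasurableSpace E] (μ : ℕ → Measure E)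
    [∀ k, IsFiniteMeasure (μ k)] (f : E →ᵇ ℝ) (n : ℕ) :
    ∫ x, f x ∂cesaroMean μ n = ((n : ℝ) + 1)⁻¹ * ∑ k ∈ Finset.range (n + 1), ∫ x, f x ∂μ k := by
  rw [cesaroMean, integral_smul_measure, integral_finsetSum_measure fun k _ ↦ f.integrable (μ k),
    ENNReal.toReal_inv, ENNReal.toReal_add (by simp) (by simp), ENNReal.toReal_natCast,
    ENNReal.toReal_one, smul_eq_mul]

/-- The Feller property: the transition operator of `κ` maps bounded continuous functions to
continuous ones. -/
def IsFeller (κ : Kernel E E) : Prop :=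
  ∀ f : E →ᵇ ℝ, Continuous fun v ↦ ∫ w, f w ∂κ v

/-- The transition operator of a Feller Markov kernel as a self-map of the bounded continuous
functions. -/
noncomputable def IsFeller.transition [OpensMeasurableSpace E] {κ : Kernel E E}
    [IsMarkovKernel κ] (hκ : IsFeller κ) (f : E →ᵇ ℝ) : E →ᵇ ℝ :=
  .ofNormedAddCommGroup (fun v ↦ ∫ w, f w ∂κ v) (hκ f) ‖f‖ fun v ↦ f.norm_integral_le_norm (κ v)

variable [BorelSpace E] {κ : Kernel E E} [IsMarkovKernel κ] {μ : ℕ → Measure E}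
  [∀ k, IsProbabilityMeasure (μ k)]

lemma norm_integral_transition_cesaroMean_sub_le (hκ : IsFeller κ)
    (hμ : ∀ k, μ (k + 1) = κ ∘ₘ μ k) (f : E →ᵇ ℝ) (n : ℕ) :
    ‖∫ x, hκ.transition f x ∂cesaroMean μ n - ∫ x, f x ∂cesaroMean μ n‖
      ≤ 2 * ‖f‖ * (1 / ((n : ℝ) + 1)) := by
  have h_step (k : ℕ) : ∫ x, hκ.transition f x ∂μ k = ∫ x, f x ∂μ (k + 1) := by
    rw [hμ]
    exact (integral_comp_measure (f.integrable _)).symm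
  have h_telescope : ∫ x, hκ.transition f x ∂cesaroMean μ n - ∫ x, f x ∂cesaroMean μ n
      = ((n : ℝ) + 1)⁻¹ * (∫ x, f x ∂μ (n + 1) - ∫ x, f x ∂μ 0) := by
    simp only [integral_cesaroMean, h_step]
    rw [← mul_sub, ← Finset.sum_sub_distrib, Finset.sum_range_sub fun k ↦ ∫ x, f x ∂μ k]
  calc ‖∫ x, hκ.transition f x ∂cesaroMean μ n - ∫ x, f x ∂cesaroMean μ n‖
      = ((n : ℝ) + 1)⁻¹ * ‖∫ x, f x ∂μ (n + 1) - ∫ x, f x ∂μ 0‖ := by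
        rw [h_telescope, norm_mul, Real.norm_of_nonneg (by positivity)]
    _ ≤ ((n : ℝ) + 1)⁻¹ * (‖f‖ + ‖f‖) := by
        gcongr
        exact norm_sub_le_of_le (f.norm_integral_le_norm _) (f.norm_integral_le_norm _)
    _ = 2 * ‖f‖ * (1 / ((n : ℝ) + 1)) := by ring

lemma invariant_of_tendsto_cesaroMean [HasOuterApproxClosed E] (hκ : IsFeller κ)
    (hμ : ∀ k, μ (k + 1) = κ ∘ₘ μ k) {l : Filter ℕ} [l.NeBot] (hl : l ≤ atTop)
    {P : ℕ → ProbabilityMeasure E} (hP : ∀ n, (P n : Measure E) = cesaroMean μ n)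
    {ν : ProbabilityMeasure E} (h_lim : Tendsto P l (𝓝 ν)) :
    κ.Invariant (ν : Measure E) := by
  rw [ProbabilityMeasure.tendsto_iff_forall_integral_tendsto] at h_lim
  simp only [hP] at h_lim
  refine ext_of_forall_integral_eq_of_IsFiniteMeasure fun f ↦ ?_
  have h_zero : Tendsto (fun n ↦ ∫ x, hκ.transition f x ∂cesaroMean μ n - ∫ x, f x ∂cesaroMean μ n)
      l (𝓝 0) := by
    refine squeeze_zero_norm (norm_integral_transition_cesaroMean_sub_le hκ hμ f) ?_
    simpa using (tendsto_one_div_add_atTop_nhds_zero_nat.const_mul (2 * ‖f‖)).mono_left hl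
  have h_eq : ∫ x, hκ.transition f x ∂(ν : Measure E) - ∫ x, f x ∂(ν : Measure E) = 0 :=
    tendsto_nhds_unique ((h_lim (hκ.transition f)).sub (h_lim f)) h_zero
  exact (integral_comp_measure (f.integrable _)).trans (sub_eq_zero.1 h_eq)

theorem exists_invariant_of_isTightMeasureSet [T2Space E] [HasOuterApproxClosed E]
    (hκ : IsFeller κ) (hμ : ∀ k, μ (k + 1) = κ ∘ₘ μ k) (h_tight : IsTightMeasureSet (range μ))
    {D : Set E} (hD : IsClosed D) (hμD : ∀ k, μ k Dᶜ = 0) :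
    ∃ ν : Measure E, IsProbabilityMeasure ν ∧ κ.Invariant ν ∧ ν D = 1 := by
  let P (n : ℕ) : ProbabilityMeasure E := ⟨cesaroMean μ n, inferInstance⟩
  have h_compact : IsCompact (closure (range P)) := by
    refine isCompact_closure_of_isTightMeasureSet ?_
    exact (isTightMeasureSet_range_cesaroMean h_tight).subset <| by
      rintro _ ⟨_, ⟨n, rfl⟩, rfl⟩
      exact mem_range_self n
  obtain ⟨ν, -, hν⟩ := h_compact.ultrafilter_le_nhds' ((hyperfilter ℕ).map P)
    (Ultrafilter.mem_map.2 <| univ_mem' fun n ↦ subset_closure (mem_range_self (f := P) n))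
  have h_lim : Tendsto P (hyperfilter ℕ) (𝓝 ν) := hν
  have hPD (n : ℕ) : (P n : Measure E) D = 1 :=
    (prob_compl_eq_zero_iff hD.measurableSet).1
      (nonpos_iff_eq_zero.1 (cesaroMean_apply_le (fun k ↦ (hμD k).le) n))
  have h_limsup := ProbabilityMeasure.limsup_measure_closed_le_of_tendsto h_lim hD
  simp only [hPD, limsup_const] at h_limsup
  exact ⟨ν, inferInstance,
    invariant_of_tendsto_cesaroMean hκ hμ Nat.hyperfilter_le_atTop (fun _ ↦ rfl) h_lim,
    le_antisymm prob_le_one h_limsup⟩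

end KrylovBogoliubov

section Accessibility

lemma restrict_absolutelyContinuous_of_pos_density {m ρ : Measure E} {f : E → ℝ} {W : Set E}
    (hW : MeasurableSet W) (hf_int : IntegrableOn f W m) (hf_pos : ∀ w ∈ W, 0 < f w)
    (h_density : ∀ B ⊆ W, MeasurableSet B → (ρ B).toReal = ∫ w in B, f w ∂m) :
    m.restrict W ≪ ρ := by
  refine Measure.AbsolutelyContinuous.mk fun s hs hρs ↦ ?_
  have hsW : MeasurableSet (s ∩ W) := hs.inter hW
  have h_zero : ∫ w in s ∩ W, f w ∂m = 0 := by
    rw [← h_density _ inter_subset_right hsW, measure_mono_null inter_subset_left hρs,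
      ENNReal.toReal_zero]
  have h_supp : s ∩ W ⊆ Function.support f := fun w hw ↦ (hf_pos w hw.2).ne'
  rw [Measure.restrict_apply hs]
  by_contra h_ne
  refine h_zero.not_gt <| (setIntegral_pos_iff_support_of_nonneg_ae ?_
    (hf_int.mono_set inter_subset_right)).2 ?_
  · filter_upwards [ae_restrict_mem hsW] with w hw using (hf_pos w hw.2).le
  · rw [inter_eq_right.2 h_supp]
    exact pos_iff_ne_zero.2 h_ne

variable [TopologicalSpace E]

/-- The point `x` is accessible within `D` from the set `T`: for each neighborhood `U` of `x`
within `D` there is a number of steps, common to all starting points in `T`, after which the chain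
charges `U`. -/
def IsAccessibleWithin (κ : Kernel E E) (D T : Set E) (x : E) : Prop :=
  ∀ U ∈ 𝓝[D] x, ∃ k : ℕ, ∀ w ∈ T, (κ ^ k) w U ≠ 0

/-- On `T`, the measures `η v` with `v ∈ T` have a jointly continuous density `p v` with respect to
the reference measure `m`. -/
def HasContinuousDensityOn (η : E → Measure E) (m : Measure E) (T : Set E) : Prop :=
  ∃ p : E → E → ℝ, ContinuousOn (fun q : E × E ↦ p q.1 q.2) (T ×ˢ T) ∧
    ∀ v ∈ T, ∀ B : Set E, MeasurableSet B → B ⊆ T → (η v B).toReal = ∫ w in B, p v w ∂m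

lemma exists_pos_of_setIntegral_pos [SecondCountableTopology E] {m : Measure E} {f : E → ℝ}
    {O : Set E} (hO : MeasurableSet O) (hf : 0 < ∫ w in O, f w ∂m) :
    ∃ z ∈ O, 0 < f z ∧ ∀ G ∈ 𝓝 z, m (G ∩ O) ≠ 0 := by
  have h_pos : m {w | w ∈ O ∧ 0 < f w} ≠ 0 := by
    intro h_null
    refine hf.not_ge (integral_nonpos_of_ae ?_)
    filter_upwards [ae_restrict_of_ae (measure_eq_zero_iff_ae_notMem.1 h_null),
      ae_restrict_mem hO] with w hw hwO
    exact not_lt.1 fun h ↦ hw ⟨hwO, h⟩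
  obtain ⟨z, ⟨hzO, hz⟩, hz_nhds⟩ := exists_mem_forall_mem_nhdsWithin_pos_measure h_pos
  refine ⟨z, hzO, hz, fun G hG ↦ (hz_nhds (G ∩ O) ?_).ne'⟩
  filter_upwards [mem_nhdsWithin_of_mem_nhds hG, self_mem_nhdsWithin] with w hwG hw
  exact ⟨hwG, hw.1⟩

lemma exists_isOpen_eventually_forall_mem {X Y Z : Type*} [TopologicalSpace X] [TopologicalSpace Y]
    [TopologicalSpace Z] {f : X × Y → Z} {s : Set X} {t : Set Y} {x : X} {y : Y}
    (hf : ContinuousWithinAt f (s ×ˢ t) (x, y)) {I : Set Z} (hI : I ∈ 𝓝 (f (x, y))) :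
    ∃ G : Set Y, IsOpen G ∧ y ∈ G ∧ ∀ᶠ v in 𝓝[s] x, ∀ w ∈ G ∩ t, f (v, w) ∈ I := by
  have h_near : ∀ᶠ q in 𝓝[s] x ×ˢ 𝓝[t] y, f q ∈ I := by
    rw [← nhdsWithin_prod_eq]
    exact hf.eventually hI
  obtain ⟨P, hP, Q, hQ, hPQ⟩ := eventually_prod_iff.1 h_near
  obtain ⟨G, hG, hyG, hGQ⟩ := mem_nhdsWithin.1 hQ
  exact ⟨G, hG, hyG, hP.mono fun v hv w hw ↦ hPQ hv (hGQ hw)⟩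

lemma exists_eventually_absolutelyContinuous_of_density [SecondCountableTopology E]
    [OpensMeasurableSpace E] {T : Set E} {η : E → Measure E} [∀ v, IsFiniteMeasure (η v)]
    {m : Measure E} (hη : HasContinuousDensityOn η m T) {x : E} (hx : x ∈ T) {O : Set E}
    (hO : MeasurableSet O) (hOT : O ⊆ T) (h_pos : η x O ≠ 0) :
    ∃ ν : Measure E, ν ≠ 0 ∧ ∀ᶠ v in 𝓝[T] x, ν ≪ η v := by
  obtain ⟨p, hp_cont, hp⟩ := hη
  have h_int_pos : 0 < ∫ w in O, p x w ∂m := by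
    rw [← hp x hx O hO hOT]
    exact ENNReal.toReal_pos h_pos (measure_ne_top _ _)
  have h_int : IntegrableOn (p x) O m := not_imp_comm.1 integral_undef h_int_pos.ne'
  obtain ⟨z, hzO, hz, hz_nhds⟩ := exists_pos_of_setIntegral_pos hO h_int_pos
  obtain ⟨G, hG, hzG, h_near⟩ := exists_isOpen_eventually_forall_mem
    (hp_cont (x, z) ⟨hx, hOT hzO⟩) (Ioo_mem_nhds (half_lt_self hz) (lt_two_mul_self hz))
  have hW : MeasurableSet (G ∩ O) := hG.measurableSet.inter hO
  have hWT : G ∩ O ⊆ G ∩ T := inter_subset_inter_right G hOT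
  have h_fin : m (G ∩ O) < ∞ := by
    have h_half : G ∩ O ⊆ {w | p x z / 2 ≤ p x w} := fun w hw ↦
      (h_near.self_of_nhdsWithin hx w (hWT hw)).1.le
    have h_lt := (h_int.mono_set (s := G ∩ O) inter_subset_right).measure_ge_lt_top (half_pos hz)
    rwa [Measure.restrict_apply_superset h_half] at h_lt
  refine ⟨m.restrict (G ∩ O), ?_, ?_⟩
  · exact Measure.restrict_eq_zero.not.2 (hz_nhds G (hG.mem_nhds hzG))
  · filter_upwards [h_near, self_mem_nhdsWithin] with v hv hvT
    have h_pos (w : E) (hw : w ∈ G ∩ O) : 0 < p v w := (half_pos hz).trans (hv w (hWT hw)).1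
    have h_cont : ContinuousOn (p v) (G ∩ O) :=
      hp_cont.comp (Continuous.prodMk_right v).continuousOn fun w hw ↦ ⟨hvT, (hWT hw).2⟩
    have h_int_v : IntegrableOn (p v) (G ∩ O) m := by
      refine .of_bound h_fin (h_cont.aestronglyMeasurable hW) (2 * p x z) ?_
      filter_upwards [ae_restrict_mem hW] with w hw
      exact (Real.norm_of_nonneg (h_pos w hw).le).trans_le (hv w (hWT hw)).2.le
    exact restrict_absolutelyContinuous_of_pos_density hW h_int_v h_pos
      fun B hB hB_meas ↦ hp v hvT B hB_meas (hB.trans (inter_subset_right.trans hOT))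

lemma IsAccessibleWithin.exists_eventually_absolutelyContinuous [T1Space E]
    [SecondCountableTopology E] [OpensMeasurableSpace E] {κ : Kernel E E} [IsMarkovKernel κ]
    {m : Measure E} {D T : Set E} {x : E} (h_acc : IsAccessibleWithin κ D T x) (hx : x ∈ D)
    (hT : MeasurableSet T) (hxT : T ∈ 𝓝[D] x)
    (h_density : ∀ k, 1 ≤ k → HasContinuousDensityOn ⇑(κ ^ k) m T) :
    ∃ k : ℕ, ∃ ν : Measure E, ν ≠ 0 ∧ ∀ᶠ v in 𝓝[D] x, ν ≪ (κ ^ k) v := by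
  by_cases h_subsingleton : T ⊆ {x}
  · refine ⟨0, Measure.dirac x, NeZero.ne _, mem_of_superset hxT fun v hv ↦ ?_⟩
    rw [h_subsingleton hv]
    exact Measure.AbsolutelyContinuous.rfl
  obtain ⟨y, hyT, hyx : y ≠ x⟩ := not_subset.1 h_subsingleton
  have hO : MeasurableSet (T ∩ {y}ᶜ) := hT.inter (measurableSet_singleton y).compl
  obtain ⟨k, hk⟩ := h_acc (T ∩ {y}ᶜ)
    (inter_mem hxT (mem_nhdsWithin_of_mem_nhds (isOpen_compl_singleton.mem_nhds hyx.symm)))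
  have hk1 : 1 ≤ k := by
    refine Nat.one_le_iff_ne_zero.2 fun hk0 ↦ hk y hyT ?_
    rw [hk0]
    exact (Measure.dirac_apply' y hO).trans (indicator_of_notMem (fun h ↦ h.2 rfl) _)
  have hxT' : x ∈ T := mem_of_mem_nhdsWithin hx hxT
  obtain ⟨ν, hν0, hν⟩ := exists_eventually_absolutelyContinuous_of_density (h_density k hk1) hxT'
    hO inter_subset_left (hk x hxT')
  exact ⟨k, ν, hν0, nhdsWithin_le_of_mem hxT hν⟩

lemma IsAccessibleWithin.absolutelyContinuous_of_invariant {κ : Kernel E E} {D T : Set E} {x : E}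
    (h_acc : IsAccessibleWithin κ D T x) {ν π : Measure E} {k : ℕ}
    (hν : ∀ᶠ v in 𝓝[D] x, ν ≪ (κ ^ k) v) (hπ : κ.Invariant π) (hπT : π T ≠ 0) : ν ≪ π := by
  obtain ⟨j, hj⟩ := h_acc _ hν
  have h_charged : π {v | ν ≪ (κ ^ k) v} ≠ 0 :=
    measure_ne_zero_of_invariant (invariant_pow hπ j) hπT hj
  intro s hs
  by_contra hνs
  exact measure_ne_zero_of_invariant (invariant_pow hπ k) h_charged (fun v hv h ↦ hνs (hv h)) hs

end Accessibility

section Ergodicity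

lemma exists_invariant_of_drift [TopologicalSpace E] [T2Space E] [HasOuterApproxClosed E]
    [BorelSpace E] {κ : Kernel E E} [IsMarkovKernel κ]
    (hκ : IsFeller κ) {V : E → ℝ≥0∞} (hV : Measurable V)
    (hV_lim : Tendsto V (cocompact E) (𝓝 ∞)) {a b : ℝ≥0∞} (ha : a < 1) (hb : b ≠ ∞)
    (h_drift : ∀ v, ∫⁻ w, V w ∂κ v ≤ a * V v + b) {D : Set E} (hD : IsClosed D)
    (hκD : ∀ v ∈ D, κ v Dᶜ = 0) {x : E} (hx : x ∈ D) (hVx : V x ≠ ∞) :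
    ∃ μ : Measure E, IsProbabilityMeasure μ ∧ κ.Invariant μ ∧ μ D = 1 := by
  have hC : V x + b / (1 - a) ≠ ∞ :=
    ENNReal.add_ne_top.2 ⟨hVx, ENNReal.div_ne_top hb (tsub_pos_of_lt ha).ne'⟩
  refine exists_invariant_of_isTightMeasureSet hκ (μ := fun k ↦ (κ ^ k) x)
    (fun k ↦ pow_succ_apply_eq_comp κ k x) ?_ hD
    fun k ↦ pow_apply_eq_zero_of_forall_mem hD.measurableSet hκD k x hx
  exact isTightMeasureSet_of_lintegral_le hV hV_lim hC
    (forall_mem_range.2 fun k ↦ lintegral_pow_le_of_drift hV ha h_drift k x)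

lemma eq_of_invariant_of_forall_absolutelyContinuous {κ : Kernel E E} [IsMarkovKernel κ]
    {ν : Measure E} (hν : ν ≠ 0) {D : Set E}
    (h_dom : ∀ π : Measure E, IsFiniteMeasure π → κ.Invariant π → π ≠ 0 → π Dᶜ = 0 → ν ≪ π)
    {μ₁ μ₂ : Measure E} [IsProbabilityMeasure μ₁] [IsProbabilityMeasure μ₂]
    (h₁ : κ.Invariant μ₁) (h₂ : κ.Invariant μ₂) (hD₁ : μ₁ Dᶜ = 0) (hD₂ : μ₂ Dᶜ = 0) :
    μ₁ = μ₂ := by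
  by_contra hne
  obtain ⟨π₁, hle₁, π₂, hle₂, hπ₁, hπ₂, hπ₁0, hπ₂0, h_sing⟩ :=
    exists_mutuallySingular_invariant_of_ne h₁ h₂ hne
  have hν₁ : ν ≪ π₁ := h_dom π₁ (isFiniteMeasure_of_le μ₁ hle₁) hπ₁ hπ₁0
    (Measure.absolutelyContinuous_of_le hle₁ hD₁)
  have hν₂ : ν ≪ π₂ := h_dom π₂ (isFiniteMeasure_of_le μ₂ hle₂) hπ₂ hπ₂0
    (Measure.absolutelyContinuous_of_le hle₂ hD₂)
  exact hν (Measure.MutuallySingular.self_iff _ |>.1 (h_sing.mono_ac hν₁ hν₂))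

theorem eq_of_invariant_of_isAccessibleWithin [TopologicalSpace E] [T1Space E]
    [SecondCountableTopology E] [OpensMeasurableSpace E] {κ : Kernel E E} [IsMarkovKernel κ]
    {V : E → ℝ≥0∞} (hV : Measurable V) (hV_top : ∀ v, V v ≠ ∞) {S : Set E} (hS : MeasurableSet S)
    (h_lt : ∀ v ∉ S, ∫⁻ w, V w ∂κ v < V v) {D : Set E} (hD : MeasurableSet D) {x : E}
    (hSx : S ∈ 𝓝 x) (hxD : x ∈ D) (h_acc : IsAccessibleWithin κ D (S ∩ D) x) {m : Measure E}
    (h_density : ∀ k, 1 ≤ k → HasContinuousDensityOn ⇑(κ ^ k) m (S ∩ D))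
    {μ₁ μ₂ : Measure E} [IsProbabilityMeasure μ₁] [IsProbabilityMeasure μ₂]
    (h₁ : κ.Invariant μ₁) (h₂ : κ.Invariant μ₂) (hD₁ : μ₁ Dᶜ = 0) (hD₂ : μ₂ Dᶜ = 0) :
    μ₁ = μ₂ := by
  have h_nhds : S ∩ D ∈ 𝓝[D] x := inter_mem (mem_nhdsWithin_of_mem_nhds hSx) self_mem_nhdsWithin
  obtain ⟨k, ν, hν0, hν⟩ :=
    h_acc.exists_eventually_absolutelyContinuous hxD (hS.inter hD) h_nhds h_density
  refine eq_of_invariant_of_forall_absolutelyContinuous hν0 (fun π _ hπ hπ0 hπD ↦ ?_) h₁ h₂ hD₁ hD₂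
  have hπ_inter : π (S ∩ D) ≠ 0 := by
    rw [measure_inter_conull hπD]
    exact measure_ne_zero_of_lintegral_lt hV hV_top h_lt hπ hπ0
  exact h_acc.absolutelyContinuous_of_invariant hν hπ hπ_inter

lemma mul_add_lt_of_div_sub_lt {a b γ x : ℝ} (ha : a ∈ Ioo 0 1) (hb : 0 ≤ b)
    (hγ : γ ∈ Ioo √a 1) (hx : 2 * b / (γ - a) < x) : a * x + b < x := by
  have h_le_sqrt : a ≤ √a := Real.le_sqrt_of_sq_le (by nlinarith [ha.1, ha.2])
  have hγa : 0 < γ - a := by linarith [hγ.1]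
  have hx0 : 0 < x := (by positivity : 0 ≤ 2 * b / (γ - a)).trans_lt hx
  have hbx : 2 * b < x * (γ - a) := (div_lt_iff₀ hγa).1 hx
  nlinarith [mul_pos hx0 (sub_pos.2 hγ.2)]

theorem stmt9_general [MetricSpace E] [SecondCountableTopology E] [BorelSpace E]
    {κ : E → Measure E} (hκ_meas : Measurable κ) (hκ_prob : ∀ v, IsProbabilityMeasure (κ v))
    (hFeller : ∀ f : E →ᵇ ℝ, Continuous fun v ↦ ∫ w, f w ∂κ v)
    {V : E → ℝ} (hV : Measurable V) (hV_nonneg : ∀ v, 0 ≤ V v)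
    (hV_inf : Tendsto V (cocompact E) atTop) {a b : ℝ} (ha : a ∈ Ico 0 1) (hb : 0 ≤ b)
    (hLyap : ∀ v, ∫⁻ w, ENNReal.ofReal (V w) ∂κ v ≤ ENNReal.ofReal (a * V v + b))
    {S : Set E} (hS : MeasurableSet S) (hS_drift : ∀ v ∉ S, a * V v + b < V v)
    {D : Set E} (hD : IsClosed D) {m : Measure E} (h_i : ∀ v ∈ D, κ v D = 1)
    {wstar : E} (hw_int : wstar ∈ interior S) (hw_D : wstar ∈ D)
    (h_ii : ∀ δ : ℝ, 0 < δ → ∃ k : ℕ,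
      ∀ w ∈ S ∩ D, 0 < iterKernel κ k w (Metric.ball wstar δ ∩ D))
    (h_iii : ∀ k, 1 ≤ k → HasContinuousDensityOn (iterKernel κ k) m (S ∩ D)) :
    ∃! μ : Measure E, IsProbabilityMeasure μ ∧ μ.bind κ = μ ∧ μ D = 1 := by
  let K : Kernel E E := ⟨κ, hκ_meas⟩
  have : IsMarkovKernel K := ⟨hκ_prob⟩
  have h_iter (k : ℕ) : iterKernel κ k = ⇑(K ^ k) := iterKernel_eq_pow K k
  simp only [h_iter] at h_ii h_iii
  let W (v : E) : ℝ≥0∞ := ENNReal.ofReal (V v)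
  have hW : Measurable W := hV.ennreal_ofReal
  have h_drift (v : E) : ∫⁻ w, W w ∂K v ≤ ENNReal.ofReal a * W v + ENNReal.ofReal b := by
    rw [← ENNReal.ofReal_mul ha.1]
    exact (hLyap v).trans ENNReal.ofReal_add_le
  have h_strict_drift (v : E) (hv : v ∉ S) : ∫⁻ w, W w ∂K v < W v := by
    have h_nonneg : 0 ≤ a * V v + b := add_nonneg (mul_nonneg ha.1 (hV_nonneg v)) hb
    exact (hLyap v).trans_lt
      ((ENNReal.ofReal_lt_ofReal_iff_of_nonneg h_nonneg).2 (hS_drift v hv))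
  have hKD (v : E) (hv : v ∈ D) : K v Dᶜ = 0 :=
    (prob_compl_eq_zero_iff hD.measurableSet).2 (h_i v hv)
  have h_acc : IsAccessibleWithin K D (S ∩ D) wstar := by
    intro U hU
    obtain ⟨δ, hδ, hδU⟩ := Metric.mem_nhdsWithin_iff.1 hU
    obtain ⟨k, hk⟩ := h_ii δ hδ
    exact ⟨k, fun w hw ↦ ((hk w hw).trans_le (measure_mono hδU)).ne'⟩
  obtain ⟨μ, hμ, hμ_inv, hμD⟩ := exists_invariant_of_drift (κ := K) hFeller hW
    (ENNReal.tendsto_ofReal_atTop.comp hV_inf) (ENNReal.ofReal_lt_one.2 ha.2)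
    ENNReal.ofReal_ne_top h_drift hD hKD hw_D ENNReal.ofReal_ne_top
  refine ⟨μ, ⟨hμ, hμ_inv, hμD⟩, fun μ' ⟨hμ', hμ'_inv, hμ'D⟩ ↦ ?_⟩
  exact eq_of_invariant_of_isAccessibleWithin (κ := K) hW (fun _ ↦ ENNReal.ofReal_ne_top) hS
    h_strict_drift hD.measurableSet (mem_interior_iff_mem_nhds.1 hw_int) hw_D h_acc h_iii
    hμ'_inv hμ_inv ((prob_compl_eq_zero_iff hD.measurableSet).2 hμ'D)
    ((prob_compl_eq_zero_iff hD.measurableSet).2 hμD)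

end Ergodicity

end MarkovKernel

/-- Ergodicity framework for the fully discrete scheme (Theorem 5.1): a Feller Markov kernel
on `ℝ^N` satisfying the Lyapunov condition and the mass-preserving minorization condition
restricted to the hyperplane `D_α` admits exactly one invariant probability measure carried
by `D_α`. -/
theorem stmt9 (N : ℕ) (hN : 2 ≤ N) (α : ℝ)
    (κ : EuclideanSpace ℝ (Fin N) → Measure (EuclideanSpace ℝ (Fin N)))
    (hκ_meas : Measurable κ) (hκ_prob : ∀ v, IsProbabilityMeasure (κ v))
    -- Feller property
    (hFeller : ∀ f : BoundedContinuousFunction (EuclideanSpace ℝ (Fin N)) ℝ,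
      Continuous fun v => ∫ w, f w ∂(κ v))
    -- Lyapunov condition
    (V : EuclideanSpace ℝ (Fin N) → ℝ) (hV_cont : Continuous V) (hV_one : ∀ v, 1 ≤ V v)
    (hV_inf : Filter.Tendsto V (Bornology.cobounded (EuclideanSpace ℝ (Fin N))) Filter.atTop)
    (α₁ α₂ : ℝ) (hα₁ : α₁ ∈ Set.Ioo (0 : ℝ) 1) (hα₂ : 0 ≤ α₂)
    (hLyap : ∀ v, ∫⁻ w, ENNReal.ofReal (V w) ∂(κ v) ≤ ENNReal.ofReal (α₁ * V v + α₂))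
    (γ : ℝ) (hγ : γ ∈ Set.Ioo (Real.sqrt α₁) 1)
    (S : Set (EuclideanSpace ℝ (Fin N)))
    (hS : S = {v : EuclideanSpace ℝ (Fin N) | V v ≤ 2 * α₂ / (γ - α₁)})
    (Dα : Set (EuclideanSpace ℝ (Fin N)))
    (hDα : Dα = {u : EuclideanSpace ℝ (Fin N) |
      (1 / Real.pi) * ((1 / (N : ℝ)) * ∑ i, u i * Real.sqrt (1 / Real.pi)) = α})
    (μD : Measure (EuclideanSpace ℝ (Fin N)))
    (hμD : μD = (MeasureTheory.Measure.hausdorffMeasure ((N : ℝ) - 1)).restrict Dα)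
    -- (i) mass conservation
    (h_i : ∀ v ∈ Dα, κ v Dα = 1)
    -- (ii) accessibility of a point `w* ∈ Int(S) ∩ D_α`
    (wstar : EuclideanSpace ℝ (Fin N)) (hw_int : wstar ∈ interior S) (hw_D : wstar ∈ Dα)
    (h_ii : ∀ δ : ℝ, 0 < δ → ∃ kbar : ℕ,
      ∀ w ∈ S ∩ Dα, 0 < iterKernel κ kbar w (Metric.ball wstar δ ∩ Dα))
    -- (iii) jointly continuous densities w.r.t. the Hausdorff measure on `D_α`
    (h_iii : ∀ k : ℕ, 1 ≤ k → ∃ p : EuclideanSpace ℝ (Fin N) → EuclideanSpace ℝ (Fin N) → ℝ,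
      ContinuousOn (fun q : EuclideanSpace ℝ (Fin N) × EuclideanSpace ℝ (Fin N) => p q.1 q.2)
        ((S ∩ Dα) ×ˢ (S ∩ Dα)) ∧
      ∀ v ∈ S ∩ Dα, ∀ B : Set (EuclideanSpace ℝ (Fin N)), MeasurableSet B → B ⊆ S ∩ Dα →
        (iterKernel κ k v B).toReal = ∫ w in B, p v w ∂μD) :
    ∃! μ : Measure (EuclideanSpace ℝ (Fin N)),
      IsProbabilityMeasure μ ∧ μ.bind κ = μ ∧ μ Dα = 1 := by
  subst hS hDα
  exact stmt9_general hκ_meas hκ_prob hFeller hV_cont.measurable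
    (fun v ↦ zero_le_one.trans (hV_one v)) (by rwa [← Metric.cobounded_eq_cocompact])
    (Set.Ioo_subset_Ico_self hα₁) hα₂ hLyap (measurableSet_le hV_cont.measurable measurable_const)
    (fun v hv ↦ mul_add_lt_of_div_sub_lt hα₁ hα₂ hγ (not_le.1 hv))
    (isClosed_eq (by fun_prop) continuous_const) h_i hw_int hw_D h_ii h_iii
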